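/- arXiv:2507.09252 — 3 statements merged into one kernel-verified Lean document; each statement's English description precedes it below -/
import Mathlib

section
/- Let μ be a σ-finite measure on a measurable space Ω, let p and q be probability densities with respect to μ, and let M > 0 satisfy p(x) ≤ M·q(x) for all x ∈ Ω. Let (τ̂, ε) be distributed according to the product of the probability measure with density q (with respect to μ) and the uniform distribution on [0,1]. Then for every measurable set A ⊆ Ω, the probability that τ̂ ∈ A and ε < p(τ̂)/(M·q(τ̂)) equals (1/M)·∫_A p dμ, where the ratio p(x)/(M·q(x)) is interpreted as 0 when q(x) = 0. -/
open MeasureTheory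

/-!
Given a proposal `x`, acceptance has probability `p x / (M * q x) ≤ 1`; integrating this ratio
against the proposal density `q` cancels `q`. The convention `a / 0 = 0` does no harm because
the domination `p ≤ M * q` forces `p` to vanish wherever `q` does.
-/

section SubgraphMeasure

variable {Ω : Type*} [MeasurableSpace Ω] {ν : Measure Ω} {A : Set Ω}

lemma prod_apply_setOf_mem_and_lt {R : Type*} [TopologicalSpace R] [MeasurableSpace R]
    [OpensMeasurableSpace R] [LinearOrder R] [OrderClosedTopology R] [SecondCountableTopology R]
    (κ : Measure R) [SFinite κ] {f : Ω → R} (hf : Measurable f) (hA : MeasurableSet A) :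
    (ν.prod κ) {ω : Ω × R | ω.1 ∈ A ∧ ω.2 < f ω.1} = ∫⁻ x in A, κ (Set.Iio (f x)) ∂ν := by
  have hmeas : MeasurableSet {ω : Ω × R | ω.1 ∈ A ∧ ω.2 < f ω.1} :=
    (measurable_fst hA).inter (measurableSet_lt measurable_snd (hf.comp measurable_fst))
  rw [Measure.prod_apply hmeas, ← lintegral_indicator hA]
  refine lintegral_congr fun x ↦ ?_
  by_cases hx : x ∈ A <;> simp [hx, Set.Iio_def]

lemma volume_restrict_Icc_zero_one_Iio {a : ℝ} (ha : a ≤ 1) :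
    volume.restrict (Set.Icc (0 : ℝ) 1) (Set.Iio a) = ENNReal.ofReal a := by
  rw [← restrict_Ico_eq_restrict_Icc, Measure.restrict_apply measurableSet_Iio, Set.inter_comm,
    Set.Ico_inter_Iio, min_eq_right ha, Real.volume_Ico, sub_zero]

lemma prod_volume_Icc_setOf_mem_and_lt {f : Ω → ℝ} (hf : Measurable f) (hA : MeasurableSet A)
    (hf_le : ∀ᵐ x ∂ν.restrict A, f x ≤ 1) :
    (ν.prod (volume.restrict (Set.Icc (0 : ℝ) 1))) {ω : Ω × ℝ | ω.1 ∈ A ∧ ω.2 < f ω.1}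
      = ∫⁻ x in A, ENNReal.ofReal (f x) ∂ν := by
  rw [prod_apply_setOf_mem_and_lt _ hf hA]
  exact lintegral_congr_ae (hf_le.mono fun x ↦ volume_restrict_Icc_zero_one_Iio)

end SubgraphMeasure

section LikelihoodRatio

lemma ofReal_mul_ofReal_div_cancel {a b : ℝ} (h : b ≤ 0 → a ≤ 0) :
    ENNReal.ofReal b * ENNReal.ofReal (a / b) = ENNReal.ofReal a := by
  rcases le_or_gt b 0 with hb | hb
  · rw [ENNReal.ofReal_of_nonpos hb, ENNReal.ofReal_of_nonpos (h hb), zero_mul]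
  · rw [← ENNReal.ofReal_mul hb.le, mul_div_cancel₀ a hb.ne']

variable {Ω : Type*} [MeasurableSpace Ω] {μ : Measure Ω} {A : Set Ω} {p q : Ω → ℝ}

lemma setLIntegral_ofReal_div_withDensity (hq : AEMeasurable q (μ.restrict A))
    (hA : MeasurableSet A) (h : ∀ᵐ x ∂μ.restrict A, q x ≤ 0 → p x ≤ 0) :
    ∫⁻ x in A, ENNReal.ofReal (p x / q x) ∂μ.withDensity (fun x ↦ ENNReal.ofReal (q x))
      = ∫⁻ x in A, ENNReal.ofReal (p x) ∂μ := by
  rw [setLIntegral_withDensity_eq_setLIntegral_mul_non_measurable₀ μ hq.ennreal_ofReal _ hA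
    (.of_forall fun _ ↦ ENNReal.ofReal_lt_top)]
  exact lintegral_congr_ae (h.mono fun x ↦ ofReal_mul_ofReal_div_cancel)

end LikelihoodRatio

theorem acceptance_rejection_joint_prob_general
    {Ω : Type*} [MeasurableSpace Ω] {μ : Measure Ω} {p q : Ω → ℝ} {M : ℝ} {A : Set Ω}
    (hpm : Measurable p) (hqm : Measurable q) (hA : MeasurableSet A)
    (hp0 : 0 ≤ᵐ[μ.restrict A] p) (hpi : IntegrableOn p A μ)
    (hM : 0 < M) (hbound : ∀ᵐ x ∂μ.restrict A, p x ≤ M * q x) :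
    ((μ.withDensity fun x => ENNReal.ofReal (q x)).prod
        (volume.restrict (Set.Icc (0 : ℝ) 1)))
      {ω : Ω × ℝ | ω.1 ∈ A ∧ ω.2 < p ω.1 / (M * q ω.1)}
      = ENNReal.ofReal ((1 / M) * ∫ x in A, p x ∂μ) := by
  have ratio_le_one : ∀ᵐ x ∂μ.restrict A, p x / (M * q x) ≤ 1 := by
    filter_upwards [hp0, hbound] with x hpx hle
    exact div_le_one_of_le₀ hle (hpx.trans hle)
  have nonpos_of_nonpos : ∀ᵐ x ∂μ.restrict A, q x ≤ 0 → 1 / M * p x ≤ 0 := by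
    filter_upwards [hbound] with x hle hqx
    exact mul_nonpos_of_nonneg_of_nonpos (by positivity)
      (hle.trans (mul_nonpos_of_nonneg_of_nonpos hM.le hqx))
  have ratio_eq (x : Ω) : p x / (M * q x) = 1 / M * p x / q x := by
    rw [← div_div, one_div_mul_eq_div]
  calc
    _ = ∫⁻ x in A, ENNReal.ofReal (p x / (M * q x))
          ∂μ.withDensity fun x ↦ ENNReal.ofReal (q x) :=
      prod_volume_Icc_setOf_mem_and_lt (hpm.fun_div (hqm.const_mul M)) hA
        (((withDensity_absolutelyContinuous μ _).restrict A).ae_le ratio_le_one)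
    _ = ∫⁻ x in A, ENNReal.ofReal (1 / M * p x) ∂μ := by
      simp only [ratio_eq]
      exact setLIntegral_ofReal_div_withDensity hqm.aemeasurable hA nonpos_of_nonpos
    _ = ENNReal.ofReal (∫ x in A, 1 / M * p x ∂μ) :=
      (ofReal_integral_eq_lintegral_ofReal (hpi.const_mul _)
        (hp0.mono fun x hpx ↦ mul_nonneg (by positivity) hpx)).symm
    _ = ENNReal.ofReal (1 / M * ∫ x in A, p x ∂μ) := by
      rw [integral_const_mul]

/-- Acceptance-rejection sampling: joint probability of landing in `A` and being
accepted equals `(1/M) * ∫_A p dμ`. -/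
theorem acceptance_rejection_joint_prob
    {Ω : Type*} [MeasurableSpace Ω] (μ : Measure Ω) [SigmaFinite μ]
    (p q : Ω → ℝ) (hpm : Measurable p) (hqm : Measurable q)
    (hp0 : ∀ x, 0 ≤ p x) (hq0 : ∀ x, 0 ≤ q x)
    (hp1 : ∫ x, p x ∂μ = 1) (hq1 : ∫ x, q x ∂μ = 1)
    (M : ℝ) (hM : 0 < M) (hbound : ∀ x, p x ≤ M * q x)
    (A : Set Ω) (hA : MeasurableSet A) :
    ((μ.withDensity fun x => ENNReal.ofReal (q x)).prod
        (volume.restrict (Set.Icc (0 : ℝ) 1)))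
      {ω : Ω × ℝ | ω.1 ∈ A ∧ ω.2 < p ω.1 / (M * q ω.1)}
      = ENNReal.ofReal ((1 / M) * ∫ x in A, p x ∂μ) :=
  acceptance_rejection_joint_prob_general hpm hqm hA (.of_forall hp0)
    (integrable_of_integral_eq_one hp1).integrableOn hM (.of_forall hbound)
end

section
/- Let μ be a σ-finite measure on a measurable space Ω, let p and q be probability densities with respect to μ, and let M > 0 satisfy p(x) ≤ M·q(x) for all x ∈ Ω. Let (τ̂, ε) be distributed according to the product of the probability measure with density q (with respect to μ) and the uniform distribution on [0,1]. Then the probability of the acceptance event {ε < p(τ̂)/(M·q(τ̂))} equals 1/M, where the ratio p(x)/(M·q(x)) is interpreted as 0 when q(x) = 0. -/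
open MeasureTheory

/-!
A proposal `τ̂ = x` is accepted with conditional probability `p x / (M * q x)`, because this ratio
lies in `[0, 1]`. Averaging over the proposal density cancels `q`, leaving `∫ p / M`. Where
`q x = 0`, domination forces `p x = 0`, so the cancellation is also valid there.
-/

theorem volume_restrict_Icc_Iio {a b c : ℝ} (hcb : c ≤ b) :
    volume.restrict (Set.Icc a b) (Set.Iio c) = ENNReal.ofReal (c - a) := by
  have hinter : Set.Iio c ∩ Set.Icc a b = Set.Ico a c := by
    ext y
    simp only [Set.mem_inter_iff, Set.mem_Iio, Set.mem_Icc, Set.mem_Ico]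
    grind
  rw [Measure.restrict_apply measurableSet_Iio, hinter, Real.volume_Ico]

section ProductMeasure

variable {α : Type*} [MeasurableSpace α] {ν : Measure α}

theorem prod_apply_of_nullMeasurableSet {β : Type*} [MeasurableSpace β] {ρ : Measure β} [SFinite ρ]
    {s : Set (α × β)} (hs : NullMeasurableSet s (ν.prod ρ)) :
    ν.prod ρ s = ∫⁻ x, ρ (Prod.mk x ⁻¹' s) ∂ν := by
  obtain ⟨t, -, ht, hts⟩ := hs.exists_measurable_superset_ae_eq
  have hsections : ∀ᵐ x ∂ν, ρ (Prod.mk x ⁻¹' t) = ρ (Prod.mk x ⁻¹' s) :=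
    (Measure.ae_ae_of_ae_prod hts).mono fun _ hx ↦ measure_congr hx
  rw [← measure_congr hts, Measure.prod_apply ht, lintegral_congr_ae hsections]

theorem prod_volume_restrict_Icc_setOf_snd_lt {f : α → ℝ} {a b : ℝ}
    (hf : AEMeasurable f ν) (hfb : ∀ᵐ x ∂ν, f x ≤ b) :
    ν.prod (volume.restrict (Set.Icc a b)) {ω : α × ℝ | ω.2 < f ω.1} =
      ∫⁻ x, ENNReal.ofReal (f x - a) ∂ν := by
  have hregion : NullMeasurableSet {ω : α × ℝ | ω.2 < f ω.1}
      (ν.prod (volume.restrict (Set.Icc a b))) :=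
    nullMeasurableSet_lt measurable_snd.aemeasurable hf.comp_fst
  rw [prod_apply_of_nullMeasurableSet hregion]
  exact lintegral_congr_ae (hfb.mono fun _ hx ↦ volume_restrict_Icc_Iio hx)

end ProductMeasure

section AcceptanceRatio

theorem ofReal_mul_ofReal_div_mul {p q M : ℝ} (hM : 0 < M) (hp : 0 ≤ p) (hpq : p ≤ M * q) :
    ENNReal.ofReal q * ENNReal.ofReal (p / (M * q)) = ENNReal.ofReal (p / M) := by
  have hq : 0 ≤ q := nonneg_of_mul_nonneg_right (hp.trans hpq) hM
  have hp_zero : q = 0 → p / M = 0 := by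
    rintro rfl
    rw [le_antisymm (by simpa only [mul_zero] using hpq) hp, zero_div]
  rw [← ENNReal.ofReal_mul hq, ← div_div, mul_div_cancel_of_imp' hp_zero]

variable {Ω : Type*} [MeasurableSpace Ω] {μ : Measure Ω} {p q : Ω → ℝ} {M : ℝ}

theorem lintegral_withDensity_ofReal_div_mul (hp : AEMeasurable p μ) (hq : AEMeasurable q μ)
    (hp0 : ∀ᵐ x ∂μ, 0 ≤ p x) (hM : 0 < M) (hbound : ∀ᵐ x ∂μ, p x ≤ M * q x) :
    ∫⁻ x, ENNReal.ofReal (p x / (M * q x)) ∂(μ.withDensity fun x ↦ ENNReal.ofReal (q x)) =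
      ∫⁻ x, ENNReal.ofReal (p x / M) ∂μ := by
  have hratio : AEMeasurable (fun x ↦ p x / (M * q x)) μ := hp.div (hq.const_mul M)
  rw [lintegral_withDensity_eq_lintegral_mul₀ hq.ennreal_ofReal hratio.ennreal_ofReal]
  refine lintegral_congr_ae ?_
  filter_upwards [hp0, hbound] with x hpx hpqx using ofReal_mul_ofReal_div_mul hM hpx hpqx

end AcceptanceRatio

theorem acceptance_rejection_accept_prob_general
    {Ω : Type*} [MeasurableSpace Ω] {μ : Measure Ω} {p q : Ω → ℝ} {M : ℝ}
    (hp : Integrable p μ) (hq : AEMeasurable q μ) (hp0 : ∀ᵐ x ∂μ, 0 ≤ p x)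
    (hM : 0 < M) (hbound : ∀ᵐ x ∂μ, p x ≤ M * q x) :
    ((μ.withDensity fun x ↦ ENNReal.ofReal (q x)).prod
        (volume.restrict (Set.Icc (0 : ℝ) 1)))
      {ω : Ω × ℝ | ω.2 < p ω.1 / (M * q ω.1)}
      = ENNReal.ofReal ((∫ x, p x ∂μ) / M) := by
  set ν := μ.withDensity fun x ↦ ENNReal.ofReal (q x)
  have hν : ν ≪ μ := withDensity_absolutelyContinuous μ _
  have hratio : AEMeasurable (fun x ↦ p x / (M * q x)) ν :=
    (hp.aemeasurable.div (hq.const_mul M)).mono_ac hν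
  have hratio_le : ∀ᵐ x ∂ν, p x / (M * q x) ≤ 1 := hν.ae_le <| by
    filter_upwards [hp0, hbound] with x hpx hpqx using div_le_one_of_le₀ hpqx (hpx.trans hpqx)
  have hdiv_nonneg : ∀ᵐ x ∂μ, 0 ≤ p x / M := hp0.mono fun _ hpx ↦ div_nonneg hpx hM.le
  calc
    _ = ∫⁻ x, ENNReal.ofReal (p x / (M * q x)) ∂ν := by
      simpa only [sub_zero] using prod_volume_restrict_Icc_setOf_snd_lt (a := 0) hratio hratio_le
    _ = ∫⁻ x, ENNReal.ofReal (p x / M) ∂μ :=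
      lintegral_withDensity_ofReal_div_mul hp.aemeasurable hq hp0 hM hbound
    _ = ENNReal.ofReal ((∫ x, p x ∂μ) / M) := by
      rw [← ofReal_integral_eq_lintegral_ofReal (hp.div_const M) hdiv_nonneg, integral_div]

/-- Acceptance-rejection sampling: the probability of the acceptance event equals `1/M`. -/
theorem acceptance_rejection_accept_prob
    {Ω : Type*} [MeasurableSpace Ω] (μ : Measure Ω) [SigmaFinite μ]
    (p q : Ω → ℝ) (hpm : Measurable p) (hqm : Measurable q)
    (hp0 : ∀ x, 0 ≤ p x) (hq0 : ∀ x, 0 ≤ q x)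
    (hp1 : ∫ x, p x ∂μ = 1) (hq1 : ∫ x, q x ∂μ = 1)
    (M : ℝ) (hM : 0 < M) (hbound : ∀ x, p x ≤ M * q x) :
    ((μ.withDensity fun x => ENNReal.ofReal (q x)).prod
        (volume.restrict (Set.Icc (0 : ℝ) 1)))
      {ω : Ω × ℝ | ω.2 < p ω.1 / (M * q ω.1)}
      = ENNReal.ofReal (1 / M) := by
  simpa only [hp1] using acceptance_rejection_accept_prob_general
    (integrable_of_integral_eq_one hp1) hqm.aemeasurable (.of_forall hp0) hM (.of_forall hbound)
end

section
/- Let K be a finite type, let f_T and f_D be probability mass functions on K, let β := ∑_{k ∈ K} min(f_T(k), f_D(k)), assume β < 1, and define f'(k) := max(0, f_T(k) − f_D(k))/(1 − β). Then for every k ∈ K, min(1, f_T(k)/f_D(k))·f_D(k) + (1 − β)·f'(k) = f_T(k), where the ratio f_T(k)/f_D(k) is interpreted as 0 when f_D(k) = 0 and where in that case the first summand is 0. In particular, for k with f_D(k) = 0 the identity reads (1 − β)·f'(k) = f_T(k). -/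
/-!
An accepted draft contributes `min (f_T k) (f_D k)` to the mass at `k`. A rejected one contributes
the excess of `f_T k` over `f_D k`, because the normalization of the adjusted distribution cancels
the rejection probability `1 - β`. The two contributions add up to `f_T k`.
-/

theorem min_one_div_mul_eq_min {G₀ : Type*} [GroupWithZero G₀] [LinearOrder G₀] [MulPosMono G₀]
    {a b : G₀} (ha : 0 ≤ a) (hb : 0 ≤ b) : min 1 (a / b) * b = min a b := by
  obtain rfl | hb_ne := eq_or_ne b 0
  · rw [mul_zero, min_eq_right ha]
  · rw [(monotone_mul_right_of_nonneg hb).map_min, one_mul, div_mul_cancel₀ _ hb_ne, min_comm]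

theorem min_add_max_zero_sub {G : Type*} [AddCommGroup G] [LinearOrder G] [IsOrderedAddMonoid G]
    (a b : G) : min a b + max 0 (a - b) = a := by
  rw [← sub_self a, max_sub_sub_left, add_sub_cancel]

theorem discrete_speculative_decoding_pointwise_identity_general
    {K 𝕜 : Type*} [Field 𝕜] [LinearOrder 𝕜] [IsStrictOrderedRing 𝕜]
    (fT fD : K → 𝕜) (hT0 : ∀ k, 0 ≤ fT k) (hD0 : ∀ k, 0 ≤ fD k) {c : 𝕜} (hc : c ≠ 0)
    (f' : K → 𝕜) (hf' : ∀ k, f' k = max 0 (fT k - fD k) / c) (k : K) :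
    min 1 (fT k / fD k) * fD k + c * f' k = fT k :=
  calc
    min 1 (fT k / fD k) * fD k + c * f' k = min (fT k) (fD k) + max 0 (fT k - fD k) := by
      rw [min_one_div_mul_eq_min (hT0 k) (hD0 k), hf' k, mul_div_cancel₀ _ hc]
    _ = fT k := min_add_max_zero_sub _ _

/-- Pointwise identity for discrete speculative decoding:
`min(1, f_T(k)/f_D(k))·f_D(k) + (1 − β)·f'(k) = f_T(k)` for every `k`
(in Lean, `f_T k / f_D k = 0` when `f_D k = 0`, so the first summand vanishes there
and the identity reads `(1 − β)·f'(k) = f_T(k)` in that case). -/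
theorem discrete_speculative_decoding_pointwise_identity
    {K : Type*} [Fintype K]
    (fT fD : K → ℝ) (hT0 : ∀ k, 0 ≤ fT k) (hD0 : ∀ k, 0 ≤ fD k)
    (hT1 : ∑ k, fT k = 1) (hD1 : ∑ k, fD k = 1)
    (β : ℝ) (hβ : β = ∑ k, min (fT k) (fD k)) (hβ1 : β < 1)
    (f' : K → ℝ) (hf' : ∀ k, f' k = max 0 (fT k - fD k) / (1 - β)) :
    ∀ k, min 1 (fT k / fD k) * fD k + (1 - β) * f' k = fT k :=
  discrete_speculative_decoding_pointwise_identity_general fT fD hT0 hD0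
    (sub_ne_zero.mpr hβ1.ne') f' hf'
end
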